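/- Let $n, d, p, i$ be integers with $0 \le d < n$, $1 \le p \le n-d$ and $0 \le i \le d$. Then the map $\tau \mapsto \mathcal{F}_{\tau} := \{g_{n,d,i}(B) \mid B \in \tau^{-1}(+)\}$ is a bijection between $\bar{\mathcal{S}}_{p,i}(n,d)$ and the set of $(d,i)$-Ferrers diagrams with respect to $p$. -/

import Mathlib

/-! Common definitions: signotopes and co-signotopes on `[n] = {1, …, n}` (encoded as
`Finset.Icc 1 n` in `ℕ`), sign functions are `Finset ℕ → Bool` (`true` = `+`, `false` = `-`)
that vanish (are `-`) away from the relevant subsets. -/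

open Classical in
/-- The sign function with `+`-set `S` (and `-` elsewhere). -/
noncomputable def ofPlusSet (S : Set (Finset ℕ)) : Finset ℕ → Bool :=
  fun A => if A ∈ S then true else false

/-- Number of sign changes in a list of signs. -/
def signChanges (l : List Bool) : ℕ :=
  ((l.zip l.tail).filter fun p => p.1 ≠ p.2).length

/-- Number of `+`-subsets of a sign function. -/
noncomputable def plusCount (τ : Finset ℕ → Bool) : ℕ :=
  {A : Finset ℕ | τ A = true}.ncard

/-- The series of signs `τ (C ∪ {x})` for `x ∈ [n] \ C` in increasing order.
For a `d`-subset `B` with `i`-th smallest element `b`, `series n τ (B.erase b)` is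
the `(τ,B,i)`-series. -/
def series (n : ℕ) (τ : Finset ℕ → Bool) (C : Finset ℕ) : List Bool :=
  ((Finset.Icc 1 n \ C).sort (· ≤ ·)).map fun x => τ (insert x C)

/-- An `r`-signotope on `[n]`, encoded as a sign function on all of `Finset ℕ`
which is `-` away from the `r`-subsets of `[n]`. -/
def IsSignotope (n r : ℕ) (σ : Finset ℕ → Bool) : Prop :=
  (∀ A, σ A = true → A ⊆ Finset.Icc 1 n ∧ A.card = r) ∧
  ∀ X : Finset ℕ, X ⊆ Finset.Icc 1 n → X.card = r + 1 →
    signChanges ((X.sort (· ≤ ·)).map fun x => σ (X.erase x)) ≤ 1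

/-- A `d`-co-signotope on `[n]`: every `(τ,B,i)`-series has at most one sign change. -/
def IsCoSignotope (n d : ℕ) (τ : Finset ℕ → Bool) : Prop :=
  (∀ A, τ A = true → A ⊆ Finset.Icc 1 n ∧ A.card = d) ∧
  ∀ B : Finset ℕ, B ⊆ Finset.Icc 1 n → B.card = d → ∀ b ∈ B,
    signChanges (series n τ (B.erase b)) ≤ 1

/-- `𝒮_p(n,r)`: `r`-signotopes on `[n]` with exactly `p` `+`-signs. -/
noncomputable def sigSet (n r p : ℕ) : Set (Finset ℕ → Bool) :=
  {σ | IsSignotope n r σ ∧ plusCount σ = p}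

/-- `𝒮_{≤p}(n,r)`. -/
noncomputable def sigSetLe (n r p : ℕ) : Set (Finset ℕ → Bool) :=
  {σ | IsSignotope n r σ ∧ plusCount σ ≤ p}

/-- `𝒮̄_p(n,d)`: `d`-co-signotopes on `[n]` with exactly `p` `+`-subsets. -/
noncomputable def coSigSet (n d p : ℕ) : Set (Finset ℕ → Bool) :=
  {τ | IsCoSignotope n d τ ∧ plusCount τ = p}

/-- `𝒮̄_{≤p}(n,d)`. -/
noncomputable def coSigSetLe (n d p : ℕ) : Set (Finset ℕ → Bool) :=
  {τ | IsCoSignotope n d τ ∧ plusCount τ ≤ p}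

/-- `σ` and `τ` differ by a single step: `σ⁻¹(+) ⊊ τ⁻¹(+)` and `|τ⁻¹(+)| = |σ⁻¹(+)| + 1`. -/
noncomputable def SingleStep (σ τ : Finset ℕ → Bool) : Prop :=
  {A | σ A = true} ⊂ {A | τ A = true} ∧ plusCount τ = plusCount σ + 1

/-- The higher Bruhat order on `r`-signotopes on `[n]`: reflexive-transitive closure of
the single step relation. -/
noncomputable def BruhatLe (n r : ℕ) (σ τ : Finset ℕ → Bool) : Prop :=
  Relation.ReflTransGen (fun a b => IsSignotope n r a ∧ IsSignotope n r b ∧ SingleStep a b) σ τ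

/-- The complementary higher Bruhat order on `d`-co-signotopes on `[n]`. -/
noncomputable def CoBruhatLe (n d : ℕ) (σ τ : Finset ℕ → Bool) : Prop :=
  Relation.ReflTransGen (fun a b => IsCoSignotope n d a ∧ IsCoSignotope n d b ∧ SingleStep a b) σ τ

/-- Adjacency in the graph `G_{n,d}`: `B' = (B \ {x}) ∪ {y}` with no element of `B \ {x}`
strictly between `x` and `y`. -/
def GAdj (n d : ℕ) (B B' : Finset ℕ) : Prop :=
  B ⊆ Finset.Icc 1 n ∧ B.card = d ∧ B' ⊆ Finset.Icc 1 n ∧ B'.card = d ∧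
  ∃ x ∈ B, ∃ y ∈ Finset.Icc 1 n, y ∉ B ∧ B' = insert y (B.erase x) ∧
    ∀ z ∈ B.erase x, ¬(min x y < z ∧ z < max x y)

/-- The source subset `S_{n,d,i} = {1,…,i} ∪ {n-d+i+1,…,n}`. -/
def sourceSubset (n d i : ℕ) : Finset ℕ :=
  Finset.Icc 1 i ∪ Finset.Icc (n - d + i + 1) n

/-- Connectivity inside the `+`-subsets of `τ` (the induced subgraph `G_{n,d}[τ]`). -/
def plusConn (n d : ℕ) (τ : Finset ℕ → Bool) : Finset ℕ → Finset ℕ → Prop :=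
  Relation.ReflTransGen fun A A' => τ A = true ∧ τ A' = true ∧ GAdj n d A A'

/-- The vertex set `𝒞^τ_i` of the `+`-component of `τ` containing `S_{n,d,i}`
(empty if `S_{n,d,i}` is not a `+`-subset). -/
def comp (n d : ℕ) (τ : Finset ℕ → Bool) (i : ℕ) : Set (Finset ℕ) :=
  {B | τ (sourceSubset n d i) = true ∧ τ B = true ∧ plusConn n d τ (sourceSubset n d i) B}

/-- The `j`-th smallest element (1-based) of a finite set of naturals. -/
def nthElt (B : Finset ℕ) (j : ℕ) : ℕ := (B.sort (· ≤ ·)).getD (j - 1) 0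

/-- `b_j` with the conventions `b_0 = 0` and `b_{d+1} = n+1` (as an integer). -/
def extNth (n d : ℕ) (B : Finset ℕ) (j : ℕ) : ℤ :=
  if j = 0 then 0 else if j ≤ d then (nthElt B j : ℤ) else (n : ℤ) + 1

/-- A series is left-aligned if it starts with `+` and ends with `-`. -/
def LeftAligned (l : List Bool) : Prop :=
  l.head? = some true ∧ l.getLast? = some false

/-- A series is right-aligned if it starts with `-` and ends with `+`. -/
def RightAligned (l : List Bool) : Prop :=
  l.head? = some false ∧ l.getLast? = some true

/-- `𝒮̄_{p,i}(n,d)`: co-signotopes in `𝒮̄_p(n,d)` whose only nonempty `+`-component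
is `𝒞^τ_i` (i.e. every `+`-subset lies in `𝒞^τ_i`). -/
noncomputable def coSigOnly (n d p i : ℕ) : Set (Finset ℕ → Bool) :=
  {τ | IsCoSignotope n d τ ∧ plusCount τ = p ∧ ∀ B, τ B = true → B ∈ comp n d τ i}

/-- `Z(d,i)`: points `(a_1,…,a_d) ∈ ℤ_{>0}^d` (0-indexed in Lean) with `a_j ≥ a_{j-1}`
for `j ∈ [2,i]` and `a_j ≥ a_{j+1}` for `j ∈ [i+1,d-1]` (1-based indices). -/
def ZSet (d i : ℕ) : Set (Fin d → ℤ) :=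
  {a | (∀ j, 0 < a j) ∧
    (∀ j k : Fin d, (j : ℕ) + 1 = (k : ℕ) → (k : ℕ) + 1 ≤ i → a j ≤ a k) ∧
    (∀ j k : Fin d, (j : ℕ) + 1 = (k : ℕ) → i ≤ (j : ℕ) → a k ≤ a j)}

/-- A `(d,i)`-Ferrers diagram with respect to `p`. -/
def IsFerrers (d i p : ℕ) (F : Set (Fin d → ℤ)) : Prop :=
  F ⊆ ZSet d i ∧ F.ncard = p ∧
  ∀ a ∈ F, ∀ a' ∈ ZSet d i, (∀ j, a' j ≤ a j) → a' ∈ F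

/-- The number of `(d,i)`-Ferrers diagrams with respect to `p`. -/
noncomputable def ferrersCount (d i p : ℕ) : ℕ :=
  {F : Set (Fin d → ℤ) | IsFerrers d i p F}.ncard

/-- `f_{n,d,i,j}` (here `j` is the 1-based coordinate index). -/
def fFun (n d i j : ℕ) (x : ℕ) : ℤ :=
  if j ≤ i then (x : ℤ) - j + 1 else ((n : ℤ) - x) - ((d : ℤ) - j) + 1

/-- `g_{n,d,i}` maps a `d`-subset `B = (b_1 < … < b_d)` to
`(f_{n,d,i,1}(b_1), …, f_{n,d,i,d}(b_d))`. -/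
def gMap (n d i : ℕ) (B : Finset ℕ) : Fin d → ℤ :=
  fun k => fFun n d i ((k : ℕ) + 1) (nthElt B ((k : ℕ) + 1))

/-- A sparse composition of `p` of length `d+1`. -/
def IsSparseComposition (d p : ℕ) (c : Fin (d + 1) → ℕ) : Prop :=
  (∑ i, c i) = p ∧
  ∀ i : Fin (d + 1), 1 ≤ (i : ℕ) →
    c i = 0 ∨ c ⟨(i : ℕ) - 1, lt_of_le_of_lt (Nat.sub_le _ _) i.isLt⟩ = 0

/-- The component `τ_i` of the `+`-component decomposition `Δ(τ)`:
the sign function whose `+`-set is `𝒞^τ_i`. -/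
noncomputable def compFun (n d : ℕ) (τ : Finset ℕ → Bool) (i : ℕ) : Finset ℕ → Bool :=
  ofPlusSet (comp n d τ i)

/-- Keep the `i` smallest elements of `B` and shift the others by `ñ - n`
(this is `g⁻¹_{ñ,d,i} ∘ g_{n,d,i}` on `d`-subsets). -/
def gammaSet (n tn i : ℕ) (B : Finset ℕ) : Finset ℕ :=
  ((B.sort (· ≤ ·)).mapIdx fun k x => if k < i then x else x + tn - n).toFinset

/-- The map `h_{n,ñ,d,p,i}` on sign functions. -/
noncomputable def hFun (n tn i : ℕ) (τ : Finset ℕ → Bool) : Finset ℕ → Bool :=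
  ofPlusSet {A | ∃ B, τ B = true ∧ A = gammaSet n tn i B}

open Classical in
/-- `γ_{τ,ñ}(B)`: replace `b_j` by `b_j + ñ - n` whenever the `(τ,B,j)`-series is
right-aligned. -/
noncomputable def gammaFun (n tn : ℕ) (τ : Finset ℕ → Bool) (B : Finset ℕ) : Finset ℕ :=
  B.image fun x => if RightAligned (series n τ (B.erase x)) then x + tn - n else x

/-- The simple bijection `φ_{n,ñ,d,p}` on sign functions. -/
noncomputable def phiFun (n tn : ℕ) (τ : Finset ℕ → Bool) : Finset ℕ → Bool :=
  ofPlusSet {A | ∃ B, τ B = true ∧ A = gammaFun n tn τ B}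

/-! ### Sign changes -/

lemma signChanges_cons_cons (a b : Bool) (l : List Bool) :
    signChanges (a :: b :: l) = (if a ≠ b then 1 else 0) + signChanges (b :: l) := by
  unfold signChanges
  by_cases h : a = b <;> simp [h]
  omega

lemma signChanges_zero {l : List Bool} (h : signChanges l = 0) :
    ∀ a ∈ l, ∀ b ∈ l, a = b := by
  induction l with
  | nil => simp
  | cons a l ih =>
    cases l with
    | nil => simp
    | cons b l =>
      rw [signChanges_cons_cons] at h
      have h1 : a = b := by
        by_contra hne
        simp [hne] at h
      have h2 := ih (by omega)
      subst h1
      intro x hx y hy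
      have hx' : x ∈ a :: l := by simpa using hx
      have hy' : y ∈ a :: l := by simpa using hy
      exact h2 x hx' y hy'

lemma signChanges_le_one {l : List Bool} (h : signChanges l ≤ 1) :
    l.Pairwise (fun a b => a = true → b = true) ∨ l.Pairwise (fun a b => b = true → a = true) := by
  induction l with
  | nil => simp
  | cons a l ih =>
    cases l with
    | nil => simp
    | cons b l =>
      rw [signChanges_cons_cons] at h
      by_cases hab : a = b
      · subst hab
        have := ih (by simpa using h)
        rcases this with h1 | h1
        · left
          refine List.pairwise_cons.2 ⟨?_, h1⟩
          intro x hx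
          rcases List.mem_cons.1 hx with rfl | hx
          · exact id
          · exact (List.pairwise_cons.1 h1).1 x hx
        · right
          refine List.pairwise_cons.2 ⟨?_, h1⟩
          intro x hx
          rcases List.mem_cons.1 hx with rfl | hx
          · exact id
          · exact (List.pairwise_cons.1 h1).1 x hx
      · rw [if_pos hab] at h
        have h0 := signChanges_zero (l := b :: l) (by omega)
        have hb : ∀ x ∈ b :: l, x = b := fun x hx => h0 x hx b (by simp)
        have hp : ∀ R : Bool → Bool → Prop, R b b → (b :: l).Pairwise R := by
          intro R hR
          apply List.pairwise_of_forall_mem_list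
          intro x hx y hy
          rw [hb x hx, hb y hy]; exact hR
        cases a <;> cases b <;> simp at hab
        · left
          exact List.pairwise_cons.2 ⟨by simp, hp _ (by simp)⟩
        · right
          exact List.pairwise_cons.2 ⟨by simp, hp _ (by simp)⟩

lemma signChanges_eq_zero_of_const {l : List Bool} (c : Bool) (h : ∀ x ∈ l, x = c) :
    signChanges l = 0 := by
  induction l with
  | nil => rfl
  | cons a l ih =>
    cases l with
    | nil => rfl
    | cons b l =>
      rw [signChanges_cons_cons, ih (fun x hx => h x (by simp [hx]))]
      have h1 := h a (by simp)
      have h2 := h b (by simp)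
      simp [h1, h2]

lemma signChanges_le_one_of {l : List Bool}
    (h : l.Pairwise (fun a b => a = true → b = true) ∨
      l.Pairwise (fun a b => b = true → a = true)) : signChanges l ≤ 1 := by
  induction l with
  | nil => simp [signChanges]
  | cons a l ih =>
    cases l with
    | nil => simp [signChanges]
    | cons b l =>
      rw [signChanges_cons_cons]
      by_cases hab : a = b
      · have := ih (h.imp (fun h => (List.pairwise_cons.1 h).2) (fun h => (List.pairwise_cons.1 h).2))
        simpa [hab] using this
      · have : signChanges (b :: l) = 0 := by
          apply signChanges_eq_zero_of_const b
          intro x hx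
          rcases List.mem_cons.1 hx with rfl | hx
          · rfl
          rcases h with h | h
          · have h1 := (List.pairwise_cons.1 h).1 b (by simp)
            have h2 := (List.pairwise_cons.1 (List.pairwise_cons.1 h).2).1 x hx
            clear h ih
            revert hab h1 h2
            cases a <;> cases b <;> cases x <;> decide
          · have h1 := (List.pairwise_cons.1 h).1 b (by simp)
            have h2 := (List.pairwise_cons.1 (List.pairwise_cons.1 h).2).1 x hx
            clear h ih
            revert hab h1 h2
            cases a <;> cases b <;> cases x <;> decide
        rw [this]; split_ifs <;> simp

lemma series_mono {n : ℕ} {τ : Finset ℕ → Bool} {C : Finset ℕ}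
    (h : signChanges (series n τ C) ≤ 1) :
    (∀ x ∈ Finset.Icc 1 n \ C, ∀ y ∈ Finset.Icc 1 n \ C, x ≤ y →
      τ (insert x C) = true → τ (insert y C) = true) ∨
    (∀ x ∈ Finset.Icc 1 n \ C, ∀ y ∈ Finset.Icc 1 n \ C, x ≤ y →
      τ (insert y C) = true → τ (insert x C) = true) := by
  have key : ∀ R : Bool → Bool → Prop, (∀ a, R a a) → (series n τ C).Pairwise R →
      ∀ x ∈ Finset.Icc 1 n \ C, ∀ y ∈ Finset.Icc 1 n \ C, x ≤ y →
        R (τ (insert x C)) (τ (insert y C)) := by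
    intro R hR hp x hx y hy hxy
    unfold series at hp
    rw [List.pairwise_map] at hp
    rcases hxy.eq_or_lt with rfl | hlt
    · exact hR _
    set L := (Finset.Icc 1 n \ C).sort (· ≤ ·) with hL
    have hs : L.Pairwise (· ≤ ·) := Finset.pairwise_sort _ _
    have hxL : x ∈ L := (Finset.mem_sort _).2 hx
    have hyL : y ∈ L := (Finset.mem_sort _).2 hy
    obtain ⟨s, hs1, rfl⟩ := List.getElem_of_mem hxL
    obtain ⟨t, ht1, rfl⟩ := List.getElem_of_mem hyL
    have : s < t := by
      by_contra hst
      rcases (not_lt.1 hst).eq_or_lt with h | h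
      · subst h; exact lt_irrefl _ hlt
      · exact absurd (List.pairwise_iff_getElem.1 hs t s ht1 hs1 h) (not_le.2 hlt)
    exact List.pairwise_iff_getElem.1 hp s t hs1 ht1 this
  rcases signChanges_le_one h with h | h
  · left; exact key _ (fun a => id) h
  · right; exact key _ (fun a => id) h

lemma series_of_mono {n : ℕ} {τ : Finset ℕ → Bool} {C : Finset ℕ}
    (h : (∀ x ∈ Finset.Icc 1 n \ C, ∀ y ∈ Finset.Icc 1 n \ C, x < y →
      τ (insert x C) = true → τ (insert y C) = true) ∨
    (∀ x ∈ Finset.Icc 1 n \ C, ∀ y ∈ Finset.Icc 1 n \ C, x < y →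
      τ (insert y C) = true → τ (insert x C) = true)) :
    signChanges (series n τ C) ≤ 1 := by
  apply signChanges_le_one_of
  unfold series
  rw [List.pairwise_map, List.pairwise_map]
  have hs : ((Finset.Icc 1 n \ C).sort (· ≤ ·)).Pairwise (· < ·) :=
    (Finset.sortedLT_sort _).pairwise
  refine h.imp (fun h => ?_) (fun h => ?_)
  · refine List.Pairwise.imp_of_mem ?_ hs
    intro a b ha hb hab
    exact h a ((Finset.mem_sort _).1 ha) b ((Finset.mem_sort _).1 hb) hab
  · refine List.Pairwise.imp_of_mem ?_ hs
    intro a b ha hb hab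
    exact h a ((Finset.mem_sort _).1 ha) b ((Finset.mem_sort _).1 hb) hab

/-! ### Representing `d`-subsets by strictly monotone functions -/

/-- The set of values. -/
def Bs {d : ℕ} (b : Fin d → ℕ) : Finset ℕ := Finset.univ.image b

/-- `g` on functions. -/
def gf (n d i : ℕ) (b : Fin d → ℕ) : Fin d → ℤ :=
  fun k => if (k : ℕ) < i then (b k : ℤ) - (k : ℕ) else (n : ℤ) + 2 + (k : ℕ) - d - b k

/-- strictly monotone, with values in `[n]`. -/
def Valid (n : ℕ) {d : ℕ} (b : Fin d → ℕ) : Prop :=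
  StrictMono b ∧ ∀ k, 1 ≤ b k ∧ b k ≤ n

lemma mem_Bs {d : ℕ} {b : Fin d → ℕ} {x : ℕ} : x ∈ Bs b ↔ ∃ k, b k = x := by
  simp [Bs]

lemma Bs_card {d : ℕ} {b : Fin d → ℕ} (h : StrictMono b) : (Bs b).card = d := by
  unfold Bs
  rw [Finset.card_image_of_injective _ h.injective]; simp

lemma Valid.sub {n d : ℕ} {b : Fin d → ℕ} (h : Valid n b) : Bs b ⊆ Finset.Icc 1 n := by
  intro x hx
  obtain ⟨k, rfl⟩ := mem_Bs.1 hx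
  exact Finset.mem_Icc.2 (h.2 k)

lemma nthElt_Bs {d : ℕ} {b : Fin d → ℕ} (h : StrictMono b) (k : Fin d) :
    nthElt (Bs b) ((k : ℕ) + 1) = b k := by
  have hc := Bs_card h
  have h1 := Finset.orderEmbOfFin_unique hc (f := b) (fun x => mem_Bs.2 ⟨x, rfl⟩) h
  have h2 : b k = (Bs b).orderEmbOfFin hc k := congrFun h1 k
  rw [h2]
  unfold nthElt
  rw [Finset.orderEmbOfFin_apply]
  simp only [Nat.add_sub_cancel]
  rw [List.getD_eq_getElem]
  rfl

lemma Bs_inj {d : ℕ} {b b' : Fin d → ℕ} (h : StrictMono b) (h' : StrictMono b')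
    (e : Bs b = Bs b') : b = b' := by
  funext k
  rw [← nthElt_Bs h k, e, nthElt_Bs h' k]

lemma exists_Bs {n d : ℕ} {B : Finset ℕ} (hB : B ⊆ Finset.Icc 1 n) (hc : B.card = d) :
    ∃ b : Fin d → ℕ, Valid n b ∧ Bs b = B := by
  refine ⟨B.orderEmbOfFin hc, ⟨(B.orderEmbOfFin hc).strictMono, fun k => ?_⟩, ?_⟩
  · exact Finset.mem_Icc.1 (hB (Finset.orderEmbOfFin_mem B hc k))
  · unfold Bs
    exact Finset.image_orderEmbOfFin_univ B hc

lemma gMap_Bs {n d i : ℕ} {b : Fin d → ℕ} (h : StrictMono b) :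
    gMap n d i (Bs b) = gf n d i b := by
  funext k
  unfold gMap gf fFun
  rw [nthElt_Bs h]
  by_cases hk : (k : ℕ) < i
  · rw [if_pos (by omega), if_pos hk]; push_cast; ring
  · rw [if_neg (by omega), if_neg hk]; push_cast; ring

lemma gf_inj {n d i : ℕ} {b b' : Fin d → ℕ} (e : gf n d i b = gf n d i b') : b = b' := by
  funext k
  have := congrFun e k
  unfold gf at this
  split_ifs at this <;> omega

lemma strictMono_of_adj {d : ℕ} {α : Type*} [Preorder α] {b : Fin d → α}
    (h : ∀ j k : Fin d, (j : ℕ) + 1 = k → b j < b k) : StrictMono b := by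
  cases d with
  | zero => intro a; exact a.elim0
  | succ d =>
    rw [Fin.strictMono_iff_lt_succ]
    intro j
    exact h _ _ (by simp)

lemma Valid.bounds {n d : ℕ} {b : Fin d → ℕ} (h : Valid n b) (k : Fin d) :
    (k : ℕ) + 1 ≤ b k ∧ b k + d ≤ n + 1 + k := by
  constructor
  · obtain ⟨k, hk⟩ := k
    induction k with
    | zero => exact (h.2 _).1
    | succ m ih =>
      have h1 := ih (by omega)
      have h2 : b ⟨m, by omega⟩ < b ⟨m+1, hk⟩ := h.1 (by simp)
      simp only at h1 ⊢
      omega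
  · have key : ∀ m, ∀ k : Fin d, (k : ℕ) + m + 1 = d → b k + d ≤ n + 1 + k := by
      intro m
      induction m with
      | zero => intro k hk; have := (h.2 k).2; omega
      | succ m ih =>
        intro k hk
        have h1 := ih ⟨k + 1, by omega⟩ (by simp only; omega)
        have h2 : b k < b ⟨k+1, by omega⟩ := h.1 (by rw [Fin.lt_def]; simp)
        simp only at h1
        omega
    exact key (d - 1 - k) k (by omega)

lemma gf_mem_Z {n d i : ℕ} {b : Fin d → ℕ} (h : Valid n b) : gf n d i b ∈ ZSet d i := by
  refine ⟨fun k => ?_, fun j k hjk hk => ?_, fun j k hjk hk => ?_⟩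
  · have := h.bounds k
    unfold gf; split_ifs <;> omega
  · have : b j < b k := h.1 (by rw [Fin.lt_def]; omega)
    unfold gf; rw [if_pos (by omega), if_pos (by omega)]; omega
  · have : b j < b k := h.1 (by rw [Fin.lt_def]; omega)
    unfold gf; rw [if_neg (by omega), if_neg (by omega)]; omega

lemma Z_mono {d i : ℕ} {a : Fin d → ℤ} (h : a ∈ ZSet d i) :
    ∀ m, ∀ j k : Fin d, (j : ℕ) + m = k → ((k : ℕ) < i → a j ≤ a k) ∧ (i ≤ (j : ℕ) → a k ≤ a j) := by
  intro m
  induction m with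
  | zero =>
    intro j k hjk
    have : j = k := Fin.ext (by omega)
    subst this; simp
  | succ m ih =>
    intro j k hjk
    have h1 := ih j ⟨j + m, by omega⟩ rfl
    constructor
    · intro hk
      exact (h1.1 (by simp only; omega)).trans (h.2.1 _ k (by simp only; omega) (by omega))
    · intro hj
      exact (h.2.2 _ k (by simp only; omega) (by simp only; omega)).trans (h1.2 hj)

/-- The inverse of `g`. -/
def finv (n d i : ℕ) (a : Fin d → ℤ) : Fin d → ℕ :=
  fun k => if (k : ℕ) < i then (a k + (k : ℕ)).toNat else ((n : ℤ) + 2 + (k : ℕ) - d - a k).toNat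

lemma finv_valid {n d i : ℕ} {a : Fin d → ℤ} (ha : a ∈ ZSet d i)
    (h1 : ∀ k, a k ≤ (n : ℤ) - d + 1)
    (h2 : ∀ j k : Fin d, (j : ℕ) + 1 = k → (k : ℕ) = i → a j + a k ≤ (n : ℤ) - d + 2) :
    Valid n (finv n d i a) ∧ gf n d i (finv n d i a) = a := by
  refine ⟨⟨strictMono_of_adj ?_, ?_⟩, ?_⟩
  · intro j k hjk
    have p1 := ha.1 j
    have p2 := ha.1 k
    have q1 := h1 j
    have q2 := h1 k
    have r1 := ha.2.1 j k hjk
    have r2 := ha.2.2 j k hjk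
    have r3 := h2 j k hjk
    unfold finv
    split_ifs with c1 c2 c2
    · have := r1 (by omega); omega
    · omega
    · have := r3 (by omega); omega
    · have := r2 (by omega); omega
  · intro k
    have p2 := ha.1 k
    have q2 := h1 k
    have := k.2
    unfold finv
    split_ifs <;> omega
  · funext k
    have p2 := ha.1 k
    have q2 := h1 k
    have := k.2
    unfold gf finv
    split_ifs <;> omega

lemma inv_of_le {n d i : ℕ} {b : Fin d → ℕ} (hb : Valid n b) {a : Fin d → ℤ}
    (ha : a ∈ ZSet d i) (hle : ∀ k, a k ≤ gf n d i b k) :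
    ∃ b', Valid n b' ∧ gf n d i b' = a := by
  refine ⟨finv n d i a, finv_valid ha ?_ ?_⟩
  · intro k
    have h1 := hle k
    have h2 := hb.bounds k
    unfold gf at h1
    split_ifs at h1 <;> omega
  · intro j k hjk hk
    have h1 := hle k
    have h2 := hle j
    have h3 : b j < b k := hb.1 (by rw [Fin.lt_def]; omega)
    unfold gf at h1 h2
    split_ifs at h1 h2 <;> omega

lemma Z_step {d i : ℕ} {a a' : Fin d → ℤ} (ha : a ∈ ZSet d i) (ha' : a' ∈ ZSet d i)
    (hle : ∀ k, a' k ≤ a k) (hne : a' ≠ a) :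
    ∃ k, Function.update a k (a k - 1) ∈ ZSet d i ∧
      ∀ j, a' j ≤ Function.update a k (a k - 1) j := by
  classical
  set D := Finset.univ.filter (fun k : Fin d => a' k < a k) with hD
  have hDne : D.Nonempty := by
    by_contra h
    apply hne
    funext k
    by_contra hk
    apply h
    exact ⟨k, by simp [hD]; exact lt_of_le_of_ne (hle k) hk⟩
  obtain ⟨k, hkD, hmin⟩ := Finset.exists_min_image D
    (fun k : Fin d => if (k : ℕ) < i then (k : ℕ) else 2 * d - k) hDne
  have hk : a' k < a k := by simpa [hD] using hkD
  have hout : ∀ j : Fin d, ¬ ((if (k : ℕ) < i then (k : ℕ) else 2 * d - k) ≤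
      (if (j : ℕ) < i then (j : ℕ) else 2 * d - j)) → a' j = a j := by
    intro j hj
    by_contra hne
    exact hj (hmin j (by simp [hD]; exact lt_of_le_of_ne (hle j) hne))
  refine ⟨k, ⟨?_, ?_, ?_⟩, ?_⟩
  · intro j
    rw [Function.update_apply]
    split_ifs with h
    · have := ha'.1 k; omega
    · exact ha.1 j
  · intro j l hjl hl
    have h1 := ha.2.1 j l hjl hl
    have h2 := ha'.2.1 j l hjl hl
    rw [Function.update_apply, Function.update_apply]
    split_ifs with c1 c2 c2
    · omega
    · subst c1; omega
    · subst c2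
      have := hout j (by rw [if_pos (by omega), if_pos (by omega)]; omega)
      omega
    · exact h1
  · intro j l hjl hl
    have h1 := ha.2.2 j l hjl hl
    have h2 := ha'.2.2 j l hjl hl
    rw [Function.update_apply, Function.update_apply]
    split_ifs with c1 c2 c2
    · omega
    · subst c1; omega
    · subst c2
      have := hout l (by rw [if_neg (by omega), if_neg (by omega)]; omega)
      omega
    · exact h1
  · intro j
    rw [Function.update_apply]
    split_ifs with c
    · subst c; omega
    · exact hle j

lemma Bs_update {d : ℕ} {b : Fin d → ℕ} (hb : Function.Injective b) (k : Fin d) (y : ℕ) :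
    Bs (Function.update b k y) = insert y ((Bs b).erase (b k)) := by
  ext z
  simp only [mem_Bs, Finset.mem_insert, Finset.mem_erase]
  constructor
  · rintro ⟨j, rfl⟩
    by_cases h : j = k
    · subst h; simp
    · right
      rw [Function.update_of_ne h]
      exact ⟨fun e => h (hb e), j, rfl⟩
  · rintro (rfl | ⟨h, j, rfl⟩)
    · exact ⟨k, by simp⟩
    · refine ⟨j, ?_⟩
      rw [Function.update_of_ne]
      rintro rfl; exact h rfl

/-- decreasing one coordinate of `g b` by one. -/
lemma step_repr {n d i : ℕ} {b b' : Fin d → ℕ} {k : Fin d}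
    (e : gf n d i b' = Function.update (gf n d i b) k (gf n d i b k - 1)) :
    b' = Function.update b k (b' k) ∧
      (((k : ℕ) < i ∧ b' k + 1 = b k) ∨ (i ≤ (k : ℕ) ∧ b' k = b k + 1)) := by
  constructor
  · funext j
    by_cases h : j = k
    · subst h; simp
    · rw [Function.update_of_ne h]
      have := congrFun e j
      rw [Function.update_of_ne h] at this
      unfold gf at this
      split_ifs at this <;> omega
  · have := congrFun e k
    rw [Function.update_self] at this
    unfold gf at this
    split_ifs at this <;> omega

/-! ### The source subset -/

/-- The function representing the source subset. -/
def srcf (n d i : ℕ) : Fin d → ℕ := fun k => if (k : ℕ) < i then k + 1 else n - d + k + 1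

lemma srcf_valid {n d i : ℕ} (hdn : d < n) : Valid n (srcf n d i) := by
  refine ⟨fun j k hjk => ?_, fun k => ?_⟩
  · rw [Fin.lt_def] at hjk
    unfold srcf; split_ifs <;> omega
  · have := k.2
    unfold srcf; split_ifs <;> omega

lemma srcf_gf {n d i : ℕ} (hdn : d < n) : gf n d i (srcf n d i) = fun _ => 1 := by
  funext k
  unfold gf srcf; split_ifs <;> omega

lemma Bs_srcf {n d i : ℕ} (hdn : d < n) (hi : i ≤ d) :
    Bs (srcf n d i) = sourceSubset n d i := by
  ext x
  simp only [mem_Bs, sourceSubset, Finset.mem_union, Finset.mem_Icc]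
  constructor
  · rintro ⟨k, rfl⟩
    have := k.2
    unfold srcf; split_ifs <;> omega
  · rintro (h | h)
    · refine ⟨⟨x - 1, by omega⟩, ?_⟩
      unfold srcf; simp only; split_ifs <;> omega
    · refine ⟨⟨x - (n - d) - 1, by omega⟩, ?_⟩
      unfold srcf; simp only; split_ifs <;> omega

lemma one_mem_Z {d i : ℕ} : (fun _ => 1 : Fin d → ℤ) ∈ ZSet d i := by
  refine ⟨by simp, by simp, by simp⟩

/-! ### Counting elements -/

lemma le_iff_count {d : ℕ} {b : Fin d → ℕ} (hb : StrictMono b) (j : Fin d) (t : ℕ) :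
    b j ≤ t ↔ (j : ℕ) < ((Bs b).filter (· ≤ t)).card := by
  have e : ((Bs b).filter (· ≤ t)).card = (Finset.univ.filter (fun k => b k ≤ t)).card := by
    unfold Bs
    rw [Finset.filter_image, Finset.card_image_of_injective _ hb.injective]
  rw [e]
  constructor
  · intro h
    have : Finset.Iic j ⊆ Finset.univ.filter (fun k => b k ≤ t) := by
      intro l hl
      simp only [Finset.mem_filter, Finset.mem_univ, true_and]
      exact (hb.monotone (Finset.mem_Iic.1 hl)).trans h
    have := Finset.card_le_card this
    rw [Fin.card_Iic] at this
    omega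
  · intro h
    by_contra hn
    have : Finset.univ.filter (fun k => b k ≤ t) ⊆ Finset.Iio j := by
      intro l hl
      simp only [Finset.mem_filter, Finset.mem_univ, true_and] at hl
      rw [Finset.mem_Iio]
      by_contra hlj
      exact hn ((hb.monotone (not_lt.1 hlj)).trans hl)
    have := Finset.card_le_card this
    rw [Fin.card_Iio] at this
    omega

lemma count_insert {C : Finset ℕ} {x : ℕ} (hx : x ∉ C) (t : ℕ) :
    ((insert x C).filter (· ≤ t)).card = (C.filter (· ≤ t)).card + (if x ≤ t then 1 else 0) := by
  rw [Finset.filter_insert]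
  split_ifs with h
  · rw [Finset.card_insert_of_notMem (by simp [hx])]
  · rfl

/-! ### From co-signotopes to Ferrers diagrams -/

lemma count_contra {n d p : ℕ} {τ : Finset ℕ → Bool} (hc : plusCount τ = p) (hp1 : 1 ≤ p)
    (hp : p + d ≤ n) (W : Finset ℕ) (hW : n < W.card + d) (φ : ℕ → Finset ℕ)
    (hφ : ∀ z ∈ W, τ (φ z) = true) (inj : ∀ z ∈ W, ∀ z' ∈ W, φ z = φ z' → z = z') : False := by
  unfold plusCount at hc
  have hfin : {A : Finset ℕ | τ A = true}.Finite := Set.finite_of_ncard_ne_zero (by omega)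
  have hsub : ((W.image φ : Finset (Finset ℕ)) : Set (Finset ℕ)) ⊆ {A | τ A = true} := by
    intro A hA
    simp only [Finset.coe_image, Set.mem_image, Finset.mem_coe] at hA
    obtain ⟨z, hz, rfl⟩ := hA
    exact hφ z hz
  have h1 := Set.ncard_le_ncard hsub hfin
  rw [Set.ncard_coe_finset, Finset.card_image_of_injOn] at h1
  · omega
  · intro z hz z' hz' e
    exact inj z hz z' hz' e

lemma insert_eq_aux {D : Finset ℕ} {z z' : ℕ} (hz : z ∉ D) (e : insert z D = insert z' D) :
    z = z' := by
  have : z ∈ insert z' D := e ▸ Finset.mem_insert_self z D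
  rcases Finset.mem_insert.1 this with h | h
  · exact h
  · exact absurd h hz

lemma LR_contra {n d p : ℕ} {τ : Finset ℕ → Bool} (hc : plusCount τ = p) (hp1 : 1 ≤ p)
    (hp : p + d ≤ n) {C : Finset ℕ} {b x y : ℕ} (hC : C ⊆ Finset.Icc 1 n) (hd : C.card + 2 = d)
    (hx : x ∉ C) (hy : y ∉ C) (hxn : x ∈ Finset.Icc 1 n)
    (hyn : y ∈ Finset.Icc 1 n) (side : (x < b ∧ y < b) ∨ (b < x ∧ b < y))
    (hL : ∀ z ∈ Finset.Icc 1 n, z ∉ insert x C → z ≤ b → τ (insert z (insert x C)) = true)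
    (hR : ∀ z ∈ Finset.Icc 1 n, z ∉ insert y C → b ≤ z → τ (insert z (insert y C)) = true) :
    False := by
  have cardW : ∀ w, w ∉ C → w ∈ Finset.Icc 1 n → n < (Finset.Icc 1 n \ insert w C).card + d := by
    intro w hw hwn
    have hs : insert w C ⊆ Finset.Icc 1 n := Finset.insert_subset hwn hC
    have h1 := Finset.card_sdiff_add_card_eq_card hs
    rw [Finset.card_insert_of_notMem hw, Nat.card_Icc] at h1
    omega
  rcases side with ⟨sx, sy⟩ | ⟨sx, sy⟩
  · refine count_contra hc hp1 hp (Finset.Icc 1 n \ insert x C) (cardW x hx hxn)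
      (fun z => if z < b then insert z (insert x C) else insert z (insert y C)) ?_ ?_
    · intro z hz
      rw [Finset.mem_sdiff] at hz
      by_cases h : z < b
      · simp only [h, if_true]
        exact hL z hz.1 hz.2 h.le
      · simp only [h, if_false]
        refine hR z hz.1 ?_ (by omega)
        have := hz.2
        simp only [Finset.mem_insert, not_or] at this ⊢
        exact ⟨by omega, this.2⟩
    · have cross : ∀ z ∈ Finset.Icc 1 n \ insert x C, ∀ z' ∈ Finset.Icc 1 n \ insert x C,
          z < b → ¬ z' < b → insert z (insert x C) = insert z' (insert y C) → False := by
        intro z hz z' hz' h h' e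
        have h1 : z' ∈ insert z (insert x C) := e ▸ Finset.mem_insert_self _ _
        rw [Finset.mem_insert] at h1
        rcases h1 with h1 | h1
        · omega
        · exact (Finset.mem_sdiff.1 hz').2 h1
      intro z hz z' hz' e
      by_cases h : z < b <;> by_cases h' : z' < b <;> simp only [h, h', if_true, if_false] at e
      · exact insert_eq_aux (Finset.mem_sdiff.1 hz).2 e
      · exact (cross z hz z' hz' h h' e).elim
      · exact (cross z' hz' z hz h' h e.symm).elim
      · refine insert_eq_aux ?_ e
        have := (Finset.mem_sdiff.1 hz).2
        simp only [Finset.mem_insert, not_or] at this ⊢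
        exact ⟨by omega, this.2⟩
  · refine count_contra hc hp1 hp (Finset.Icc 1 n \ insert y C) (cardW y hy hyn)
      (fun z => if b < z then insert z (insert y C) else insert z (insert x C)) ?_ ?_
    · intro z hz
      rw [Finset.mem_sdiff] at hz
      by_cases h : b < z
      · simp only [h, if_true]
        exact hR z hz.1 hz.2 h.le
      · simp only [h, if_false]
        refine hL z hz.1 ?_ (by omega)
        have := hz.2
        simp only [Finset.mem_insert, not_or] at this ⊢
        exact ⟨by omega, this.2⟩
    · have cross : ∀ z ∈ Finset.Icc 1 n \ insert y C, ∀ z' ∈ Finset.Icc 1 n \ insert y C,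
          b < z → ¬ b < z' → insert z (insert y C) = insert z' (insert x C) → False := by
        intro z hz z' hz' h h' e
        have h1 : z' ∈ insert z (insert y C) := e ▸ Finset.mem_insert_self _ _
        rw [Finset.mem_insert] at h1
        rcases h1 with h1 | h1
        · omega
        · exact (Finset.mem_sdiff.1 hz').2 h1
      intro z hz z' hz' e
      by_cases h : b < z <;> by_cases h' : b < z' <;> simp only [h, h', if_true, if_false] at e
      · exact insert_eq_aux (Finset.mem_sdiff.1 hz).2 e
      · exact (cross z hz z' hz' h h' e).elim
      · exact (cross z' hz' z hz h' h e.symm).elim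
      · refine insert_eq_aux ?_ e
        have := (Finset.mem_sdiff.1 hz).2
        simp only [Finset.mem_insert, not_or] at this ⊢
        exact ⟨by omega, this.2⟩

/-- All entries of the series up to `x` are `+`. -/
def LP (n : ℕ) (τ : Finset ℕ → Bool) (B : Finset ℕ) (x : ℕ) : Prop :=
  ∀ y ∈ Finset.Icc 1 n, y ∉ B.erase x → y ≤ x → τ (insert y (B.erase x)) = true

/-- All entries of the series from `x` on are `+`. -/
def RP (n : ℕ) (τ : Finset ℕ → Bool) (B : Finset ℕ) (x : ℕ) : Prop :=
  ∀ y ∈ Finset.Icc 1 n, y ∉ B.erase x → x ≤ y → τ (insert y (B.erase x)) = true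

lemma LP_or_RP {n d : ℕ} {τ : Finset ℕ → Bool} (hτ : IsCoSignotope n d τ) {B : Finset ℕ}
    (hB : τ B = true) {x : ℕ} (hx : x ∈ B) : LP n τ B x ∨ RP n τ B x := by
  obtain ⟨h1, h2⟩ := hτ.1 B hB
  have hxs : x ∈ Finset.Icc 1 n \ B.erase x := by simp; exact Finset.mem_Icc.1 (h1 hx)
  have hB' : τ (insert x (B.erase x)) = true := by rwa [Finset.insert_erase hx]
  rcases series_mono (hτ.2 B h1 h2 x hx) with h | h
  · right
    intro y hy hyB hxy
    exact h x hxs y (Finset.mem_sdiff.2 ⟨hy, hyB⟩) hxy hB'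
  · left
    intro y hy hyB hxy
    exact h y (Finset.mem_sdiff.2 ⟨hy, hyB⟩) x hxs hxy hB'

lemma type_other {n d p : ℕ} {τ : Finset ℕ → Bool} (hτ : IsCoSignotope n d τ)
    (hc : plusCount τ = p) (hp1 : 1 ≤ p) (hp : p + d ≤ n) {B : Finset ℕ} {x y b : ℕ}
    (hB : τ B = true) (hx : x ∈ B) (hb : b ∈ B) (hbx : b ≠ x) (hy : y ∈ Finset.Icc 1 n) (hyB : y ∉ B)
    (hB' : τ (insert y (B.erase x)) = true) (side : (x < b ∧ y < b) ∨ (b < x ∧ b < y)) :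
    (LP n τ B b → LP n τ (insert y (B.erase x)) b) ∧
    (RP n τ B b → RP n τ (insert y (B.erase x)) b) := by
  obtain ⟨h1, h2⟩ := hτ.1 B hB
  set C := (B.erase x).erase b with hCd
  have hyb : y ≠ b := by rintro rfl; exact hyB hb
  have e1 : B.erase b = insert x C := by
    rw [hCd, Finset.erase_right_comm, Finset.insert_erase (Finset.mem_erase.2 ⟨hbx.symm, hx⟩)]
  have e2 : (insert y (B.erase x)).erase b = insert y C := by
    rw [hCd, Finset.erase_insert_of_ne hyb]
  have hbm : b ∈ B.erase x := Finset.mem_erase.2 ⟨hbx, hb⟩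
  have hC : C ⊆ Finset.Icc 1 n := fun z hz =>
    h1 (Finset.mem_of_mem_erase (Finset.mem_of_mem_erase hz))
  have hcard : C.card + 2 = d := by
    have a1 := Finset.card_erase_add_one hbm
    have a2 := Finset.card_erase_add_one hx
    rw [← hCd] at a1
    omega
  have hxC : x ∉ C := by simp [hCd]
  have hyC : y ∉ C := by
    intro h; exact hyB (Finset.mem_of_mem_erase (Finset.mem_of_mem_erase h))
  have hb' : b ∈ insert y (B.erase x) := Finset.mem_insert_of_mem hbm
  have hor := LP_or_RP hτ hB' hb'
  have side' : (y < b ∧ x < b) ∨ (b < y ∧ b < x) := by omega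
  unfold LP RP at hor ⊢
  rw [e2] at hor ⊢
  rw [e1]
  constructor
  · intro hL
    rcases hor with h | h
    · exact h
    · exact (LR_contra hc hp1 hp hC hcard hxC hyC (h1 hx) hy side hL h).elim
  · intro hR
    rcases hor with h | h
    · exact (LR_contra hc hp1 hp hC hcard hyC hxC hy (h1 hx) side' h hR).elim
    · exact h

lemma type_same {n d : ℕ} {τ : Finset ℕ → Bool} (hτ : IsCoSignotope n d τ)
    {B : Finset ℕ} {x y : ℕ}
    (hB : τ B = true) (hx : x ∈ B) (hy : y ∈ Finset.Icc 1 n) (hyB : y ∉ B)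
    (hB' : τ (insert y (B.erase x)) = true) :
    (LP n τ B x → LP n τ (insert y (B.erase x)) y) ∧
    (RP n τ B x → RP n τ (insert y (B.erase x)) y) := by
  obtain ⟨h1, h2⟩ := hτ.1 B hB
  have hyC : y ∉ B.erase x := fun h => hyB (Finset.mem_of_mem_erase h)
  unfold LP RP
  rw [Finset.erase_insert hyC]
  have hxs : x ∈ Finset.Icc 1 n \ B.erase x := by simp; exact Finset.mem_Icc.1 (h1 hx)
  have hys : y ∈ Finset.Icc 1 n \ B.erase x := Finset.mem_sdiff.2 ⟨hy, hyC⟩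
  have hBx : τ (insert x (B.erase x)) = true := by rwa [Finset.insert_erase hx]
  have hs := series_mono (hτ.2 B h1 h2 x hx)
  constructor
  · intro hL z hz hzC hzy
    have hzs := Finset.mem_sdiff.2 ⟨hz, hzC⟩
    rcases hs with h | h
    · rcases le_total z x with hzx | hzx
      · exact hL z hz hzC hzx
      · exact h x hxs z hzs hzx hBx
    · exact h z hzs y hys hzy hB'
  · intro hR z hz hzC hzy
    have hzs := Finset.mem_sdiff.2 ⟨hz, hzC⟩
    rcases hs with h | h
    · exact h y hys z hzs hzy hB'
    · rcases le_total z x with hzx | hzx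
      · exact h z hzs x hxs hzx hBx
      · exact hR z hz hzC hzx

lemma types {n d p i : ℕ} {τ : Finset ℕ → Bool} (hdn : d < n) (hi : i ≤ d)
    (hτ : IsCoSignotope n d τ)
    (hc : plusCount τ = p) (hp1 : 1 ≤ p) (hp : p + d ≤ n)
    (hsrc : τ (sourceSubset n d i) = true) {B : Finset ℕ}
    (hconn : plusConn n d τ (sourceSubset n d i) B) :
    ∀ b : Fin d → ℕ, StrictMono b → Bs b = B → ∀ k : Fin d,
      ((k : ℕ) < i → LP n τ B (b k)) ∧ (i ≤ (k : ℕ) → RP n τ B (b k)) := by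
  unfold plusConn at hconn
  induction hconn with
  | refl =>
    intro b hb e k
    have hb2 : b = srcf n d i := Bs_inj hb (srcf_valid hdn).1 (e.trans (Bs_srcf hdn hi).symm)
    have hkB : b k ∈ sourceSubset n d i := by rw [← e]; exact mem_Bs.2 ⟨k, rfl⟩
    have hkd := k.2
    constructor
    · intro hk y hy hyB hyk
      have : y = b k := by
        by_contra hne
        apply hyB
        rw [Finset.mem_erase]
        refine ⟨hne, ?_⟩
        rw [hb2] at hyk hne
        unfold srcf at hyk hne
        rw [if_pos hk] at hyk hne
        unfold sourceSubset
        rw [Finset.mem_union, Finset.mem_Icc, Finset.mem_Icc]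
        rw [Finset.mem_Icc] at hy
        omega
      rw [this, Finset.insert_erase hkB]; exact hsrc
    · intro hk y hy hyB hyk
      have : y = b k := by
        by_contra hne
        apply hyB
        rw [Finset.mem_erase]
        refine ⟨hne, ?_⟩
        rw [hb2] at hyk hne
        unfold srcf at hyk hne
        rw [if_neg (by omega)] at hyk hne
        unfold sourceSubset
        rw [Finset.mem_union, Finset.mem_Icc, Finset.mem_Icc]
        rw [Finset.mem_Icc] at hy
        omega
      rw [this, Finset.insert_erase hkB]; exact hsrc
  | @tail A A' _ hstep ih =>
    obtain ⟨hA, hA', h1, h2, h3, h4, x, hx, y, hy, hyA, rfl, hbetw⟩ := hstep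
    obtain ⟨b, hbv, rfl⟩ := exists_Bs h1 h2
    obtain ⟨j, rfl⟩ := mem_Bs.1 hx
    have hnm : ∀ l, b l ≠ y := fun l e => hyA (mem_Bs.2 ⟨l, e⟩)
    have hside : ∀ l, l ≠ j → (b j < b l ∧ y < b l) ∨ (b l < b j ∧ b l < y) := by
      intro l hl
      have hne : b l ≠ b j := fun e => hl (hbv.1.injective e)
      have := hbetw (b l) (Finset.mem_erase.2 ⟨hne, mem_Bs.2 ⟨l, rfl⟩⟩)
      have := hnm l
      omega
    have hup : StrictMono (Function.update b j y) := by
      intro l m hlm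
      have hlt := hbv.1 hlm
      by_cases hl : l = j
      · subst hl
        have hm : m ≠ l := hlm.ne'
        rw [Function.update_self, Function.update_of_ne hm]
        have := hside m hm
        omega
      · by_cases hm : m = j
        · subst hm
          rw [Function.update_self, Function.update_of_ne hl]
          have := hside l hl
          omega
        · rw [Function.update_of_ne hl, Function.update_of_ne hm]; exact hlt
    intro b' hb' e' k
    have hb'e : b' = Function.update b j y :=
      Bs_inj hb' hup (e'.trans (Bs_update hbv.1.injective j y).symm)
    have ihk := ih b hbv.1 rfl k
    by_cases hk : k = j
    · subst hk
      have hs := type_same hτ hA hx hy hyA hA'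
      have : b' k = y := by rw [hb'e]; simp
      rw [this]
      exact ⟨fun h => hs.1 (ihk.1 h), fun h => hs.2 (ihk.2 h)⟩
    · have : b' k = b k := by rw [hb'e, Function.update_of_ne hk]
      rw [this]
      have hs := type_other hτ hc hp1 hp hA hx (mem_Bs.2 ⟨k, rfl⟩ : b k ∈ Bs b)
        (fun e => hk (hbv.1.injective e)) hy hyA hA' (hside k hk)
      exact ⟨fun h => hs.1 (ihk.1 h), fun h => hs.2 (ihk.2 h)⟩

lemma down_closed {n d p i : ℕ} {τ : Finset ℕ → Bool} (hdn : d < n) (hi : i ≤ d)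
    (hp1 : 1 ≤ p) (hp : p + d ≤ n) (hτ : τ ∈ coSigOnly n d p i) (a' : Fin d → ℤ)
    (ha' : a' ∈ ZSet d i) :
    ∀ N : ℕ, ∀ b : Fin d → ℕ, Valid n b → τ (Bs b) = true → (∀ k, a' k ≤ gf n d i b k) →
      (∑ k, (gf n d i b k - a' k).toNat) = N → ∃ b', Valid n b' ∧ gf n d i b' = a' ∧
        τ (Bs b') = true := by
  intro N
  induction N using Nat.strong_induction_on with
  | _ N ih =>
    intro b hb hbt hle hN
    by_cases heq : a' = gf n d i b
    · exact ⟨b, hb, heq.symm, hbt⟩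
    obtain ⟨k, hkZ, hkle⟩ := Z_step (gf_mem_Z hb) ha' hle heq
    obtain ⟨b', hb', e⟩ := inv_of_le hb hkZ (fun j => by
      rw [Function.update_apply]; split_ifs with c
      · subst c; omega
      · exact le_rfl)
    obtain ⟨hu, hs⟩ := step_repr e
    have hcomp := hτ.2.2 _ hbt
    have ht := types hdn hi hτ.1 hτ.2.1 hp1 hp hcomp.1 hcomp.2.2 b hb.1 rfl k
    have hB' : Bs b' = insert (b' k) ((Bs b).erase (b k)) := by
      conv_lhs => rw [hu]
      exact Bs_update hb.1.injective k _
    have hnm : b' k ∉ (Bs b).erase (b k) := by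
      intro h
      obtain ⟨h1, h2⟩ := Finset.mem_erase.1 h
      obtain ⟨l, hl⟩ := mem_Bs.1 h2
      have hlk : l ≠ k := by rintro rfl; exact h1 hl.symm
      have : b' l = b l := by rw [hu, Function.update_of_ne hlk]
      exact hlk (hb'.1.injective (this.trans hl))
    have hin : b' k ∈ Finset.Icc 1 n := Finset.mem_Icc.2 (hb'.2 k)
    have hb't : τ (Bs b') = true := by
      rw [hB']
      rcases hs with ⟨h1, h2⟩ | ⟨h1, h2⟩
      · exact ht.1 h1 _ hin hnm (by omega)
      · exact ht.2 h1 _ hin hnm (by omega)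
    refine ih _ ?_ b' hb' hb't (by rw [e]; exact hkle) rfl
    rw [← hN]
    apply Finset.sum_lt_sum
    · intro j _
      rw [e, Function.update_apply]
      split_ifs with c
      · subst c; omega
      · exact le_rfl
    · refine ⟨k, Finset.mem_univ _, ?_⟩
      have := hkle k
      rw [e]
      rw [Function.update_self] at this ⊢
      omega

lemma gMap_injOn {n d i : ℕ} {τ : Finset ℕ → Bool}
    (h : ∀ A, τ A = true → A ⊆ Finset.Icc 1 n ∧ A.card = d) :
    Set.InjOn (gMap n d i) {B | τ B = true} := by
  intro A hA A' hA' e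
  obtain ⟨b, hb, rfl⟩ := exists_Bs (h A hA).1 (h A hA).2
  obtain ⟨b', hb', rfl⟩ := exists_Bs (h A' hA').1 (h A' hA').2
  rw [gMap_Bs hb.1, gMap_Bs hb'.1] at e
  rw [gf_inj e]

lemma forward {n d p i : ℕ} {τ : Finset ℕ → Bool} (hdn : d < n) (hi : i ≤ d)
    (hp1 : 1 ≤ p) (hp : p + d ≤ n) (hτ : τ ∈ coSigOnly n d p i) :
    IsFerrers d i p (gMap n d i '' {B | τ B = true}) := by
  refine ⟨?_, ?_, ?_⟩
  · rintro _ ⟨B, hB, rfl⟩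
    obtain ⟨b, hb, rfl⟩ := exists_Bs (hτ.1.1 B hB).1 (hτ.1.1 B hB).2
    rw [gMap_Bs hb.1]
    exact gf_mem_Z hb
  · rw [(gMap_injOn hτ.1.1).ncard_image]
    exact hτ.2.1
  · rintro _ ⟨B, hB, rfl⟩ a' ha' hle
    obtain ⟨b, hb, rfl⟩ := exists_Bs (hτ.1.1 B hB).1 (hτ.1.1 B hB).2
    rw [gMap_Bs hb.1] at hle
    obtain ⟨b', hb', e, ht⟩ := down_closed hdn hi hp1 hp hτ a' ha' _ b hb hB hle rfl
    exact ⟨Bs b', ht, by rw [gMap_Bs hb'.1, e]⟩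

lemma injective_part {n d p i : ℕ} :
    Set.InjOn (fun τ : Finset ℕ → Bool => gMap n d i '' {B | τ B = true})
      (coSigOnly n d p i) := by
  have key : ∀ τ ∈ coSigOnly n d p i, ∀ τ' ∈ coSigOnly n d p i,
      gMap n d i '' {B | τ B = true} = gMap n d i '' {B | τ' B = true} →
      ∀ B, τ B = true → τ' B = true := by
    intro τ hτ τ' hτ' e B hB
    have : gMap n d i B ∈ gMap n d i '' {B | τ' B = true} := e ▸ ⟨B, hB, rfl⟩
    obtain ⟨A, hA, e2⟩ := this
    obtain ⟨b, hb, rfl⟩ := exists_Bs (hτ.1.1 B hB).1 (hτ.1.1 B hB).2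
    obtain ⟨b', hb', rfl⟩ := exists_Bs (hτ'.1.1 A hA).1 (hτ'.1.1 A hA).2
    rw [gMap_Bs hb.1, gMap_Bs hb'.1] at e2
    rw [← gf_inj e2]; exact hA
  intro τ hτ τ' hτ' e
  funext B
  have h1 := key τ hτ τ' hτ' e B
  have h2 := key τ' hτ' τ hτ e.symm B
  revert h1 h2
  cases τ B <;> cases τ' B <;> simp

/-! ### From Ferrers diagrams to co-signotopes -/

lemma ofPlusSet_iff {S : Set (Finset ℕ)} {A : Finset ℕ} : ofPlusSet S A = true ↔ A ∈ S := by
  unfold ofPlusSet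
  split_ifs with h <;> simp [h]

/-- The point with `m`-th coordinate `t` and all others equal to one. -/
def pt {d : ℕ} (m : Fin d) (t : ℤ) : Fin d → ℤ := Function.update (fun _ => 1) m t

lemma pt_mem_Z {d i : ℕ} {m : Fin d} {t : ℤ} (hm : (m : ℕ) + 1 = i ∨ (m : ℕ) = i) (ht : 1 ≤ t) :
    pt m t ∈ ZSet d i := by
  unfold pt
  refine ⟨fun j => ?_, fun j l hjl hl => ?_, fun j l hjl hl => ?_⟩
  · rw [Function.update_apply]; split_ifs <;> omega
  · rw [Function.update_apply, Function.update_apply]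
    split_ifs with c1 c2 c2
    · omega
    · subst c1; omega
    · omega
    · omega
  · rw [Function.update_apply, Function.update_apply]
    split_ifs with c1 c2 c2
    · omega
    · subst c1; omega
    · omega
    · omega

lemma pt_mem {d i p : ℕ} {F : Set (Fin d → ℤ)} (hF : IsFerrers d i p F) {a : Fin d → ℤ}
    (ha : a ∈ F) {m : Fin d} {t : ℤ} (hm : (m : ℕ) + 1 = i ∨ (m : ℕ) = i) (ht : 1 ≤ t)
    (hta : t ≤ a m) : pt m t ∈ F := by
  refine hF.2.2 a ha _ (pt_mem_Z hm ht) ?_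
  intro j
  unfold pt
  rw [Function.update_apply]
  split_ifs with c
  · subst c; exact hta
  · have := (hF.1 ha).1 j; omega

lemma pt_inj {d : ℕ} {m : Fin d} {t t' : ℤ} (e : pt m t = pt m t') : t = t' := by
  have := congrFun e m
  simpa [pt] using this

lemma F_finite {d i p : ℕ} {F : Set (Fin d → ℤ)} (hF : IsFerrers d i p F) (hp1 : 1 ≤ p) :
    F.Finite := Set.finite_of_ncard_ne_zero (by have := hF.2.1; omega)

lemma single_bound {d i p : ℕ} {F : Set (Fin d → ℤ)} (hF : IsFerrers d i p F) (hp1 : 1 ≤ p)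
    {a : Fin d → ℤ} (ha : a ∈ F) {m : Fin d} (hm : (m : ℕ) + 1 = i ∨ (m : ℕ) = i) :
    a m ≤ p := by
  classical
  have hsub : (((Finset.Icc 1 (a m)).image (pt m) : Finset (Fin d → ℤ)) : Set (Fin d → ℤ)) ⊆ F := by
    intro x hx
    simp only [Finset.coe_image, Set.mem_image, Finset.mem_coe, Finset.mem_Icc] at hx
    obtain ⟨t, ht, rfl⟩ := hx
    exact pt_mem hF ha hm ht.1 ht.2
  have h1 := Set.ncard_le_ncard hsub (F_finite hF hp1)
  rw [Set.ncard_coe_finset, Finset.card_image_of_injective _ (fun t t' e => pt_inj e), hF.2.1,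
    Int.card_Icc] at h1
  omega

lemma double_bound {d i p : ℕ} {F : Set (Fin d → ℤ)} (hF : IsFerrers d i p F) (hp1 : 1 ≤ p)
    {a a' : Fin d → ℤ} (ha : a ∈ F) (ha' : a' ∈ F) {j k : Fin d} (hj : (j : ℕ) + 1 = i)
    (hk : (k : ℕ) = i) : a j + a' k ≤ p + 1 := by
  classical
  have hsub : (((Finset.Icc 1 (a j)).image (pt j) ∪ (Finset.Icc 2 (a' k)).image (pt k) :
      Finset (Fin d → ℤ)) : Set (Fin d → ℤ)) ⊆ F := by
    intro x hx
    simp only [Finset.coe_union, Set.mem_union, Finset.coe_image, Set.mem_image, Finset.mem_coe,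
      Finset.mem_Icc] at hx
    rcases hx with ⟨t, ht, rfl⟩ | ⟨t, ht, rfl⟩
    · exact pt_mem hF ha (Or.inl hj) ht.1 ht.2
    · exact pt_mem hF ha' (Or.inr hk) (by omega) ht.2
  have hdisj : Disjoint ((Finset.Icc 1 (a j)).image (pt j)) ((Finset.Icc 2 (a' k)).image (pt k)) := by
    rw [Finset.disjoint_left]
    intro x hx hx'
    simp only [Finset.mem_image, Finset.mem_Icc] at hx hx'
    obtain ⟨t, ht, rfl⟩ := hx
    obtain ⟨t', ht', e⟩ := hx'
    have hne : k ≠ j := by rintro rfl; omega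
    have := congrFun e k
    unfold pt at this
    rw [Function.update_self, Function.update_of_ne hne] at this
    omega
  have h1 := Set.ncard_le_ncard hsub (F_finite hF hp1)
  rw [Set.ncard_coe_finset, Finset.card_union_of_disjoint hdisj,
    Finset.card_image_of_injective _ (fun t t' e => pt_inj e),
    Finset.card_image_of_injective _ (fun t t' e => pt_inj e), hF.2.1,
    Int.card_Icc, Int.card_Icc] at h1
  have := (hF.1 ha).1 j
  have := (hF.1 ha').1 k
  omega

lemma F_repr {n d i p : ℕ} {F : Set (Fin d → ℤ)} (hi : i ≤ d) (hF : IsFerrers d i p F) (hp1 : 1 ≤ p)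
    (hp : p + d ≤ n) {a : Fin d → ℤ} (ha : a ∈ F) :
    ∃ b, Valid n b ∧ gf n d i b = a := by
  refine ⟨finv n d i a, finv_valid (hF.1 ha) ?_ ?_⟩
  · intro k
    have hkd := k.2
    by_cases hk : (k : ℕ) < i
    · have h1 := (Z_mono (hF.1 ha) (i - 1 - k) k ⟨i - 1, by omega⟩ (by simp only; omega)).1
        (by simp only; omega)
      have h2 := single_bound hF hp1 ha (m := ⟨i - 1, by omega⟩) (Or.inl (by simp only; omega))
      omega
    · have h1 := (Z_mono (hF.1 ha) (k - i) ⟨i, by omega⟩ k (by simp only; omega)).2 (by simp)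
      have h2 := single_bound hF hp1 ha (m := ⟨i, by omega⟩) (Or.inr rfl)
      omega
  · intro j k hjk hk
    have := double_bound hF hp1 ha ha (j := j) (k := k) (by omega) hk
    omega

lemma compare_lt {n d i : ℕ} {C : Finset ℕ} {x y : ℕ} (hx : x ∉ C) (hy : y ∉ C) {b b' : Fin d → ℕ}
    (hb : StrictMono b) (hb' : StrictMono b') (e : Bs b = insert x C) (e' : Bs b' = insert y C)
    {k : Fin d} (hk : b k = x)
    (h : (y < x ∧ (k : ℕ) < i) ∨ (x < y ∧ i ≤ (k : ℕ))) :
    ∀ j, gf n d i b' j ≤ gf n d i b j := by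
  intro j
  have cb : ∀ t, b j ≤ t ↔ (j : ℕ) < (C.filter (· ≤ t)).card + (if x ≤ t then 1 else 0) := by
    intro t; rw [le_iff_count hb, e, count_insert hx]
  have cb' : ∀ t, b' j ≤ t ↔ (j : ℕ) < (C.filter (· ≤ t)).card + (if y ≤ t then 1 else 0) := by
    intro t; rw [le_iff_count hb', e', count_insert hy]
  rcases h with ⟨hyx, hki⟩ | ⟨hxy, hki⟩
  · have h1 : b' j ≤ b j := by
      rw [cb']
      have := (cb (b j)).1 le_rfl
      split_ifs at this ⊢ <;> omega
    by_cases hj : (j : ℕ) < i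
    · unfold gf; rw [if_pos hj, if_pos hj]; omega
    · have hkj : b k < b j := hb (by rw [Fin.lt_def]; omega)
      have h2 : b j ≤ b' j := by
        by_contra hlt
        have h3 := (cb' (b j - 1)).1 (by omega)
        rw [if_pos (by omega)] at h3
        have h4 := (cb (b j - 1)).2 (by rw [if_pos (by omega)]; exact h3)
        omega
      unfold gf; rw [if_neg hj, if_neg hj]; omega
  · have h1 : b j ≤ b' j := by
      rw [cb]
      have := (cb' (b' j)).1 le_rfl
      split_ifs at this ⊢ <;> omega
    by_cases hj : (j : ℕ) < i
    · have hkj : b j < b k := hb (by rw [Fin.lt_def]; omega)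
      have h2 : b' j ≤ b j := by
        rw [cb']
        have := (cb (b j)).1 le_rfl
        rw [if_neg (by omega)] at this
        omega
      unfold gf; rw [if_pos hj, if_pos hj]; omega
    · unfold gf; rw [if_neg hj, if_neg hj]; omega

lemma no_mixed {n d i p : ℕ} {F : Set (Fin d → ℤ)} (hF : IsFerrers d i p F) (hp1 : 1 ≤ p)
    (hp : p + d ≤ n) {C : Finset ℕ} {x y : ℕ} (hx : x ∉ C) (hy : y ∉ C) {b b' : Fin d → ℕ}
    (hb : StrictMono b) (hb' : StrictMono b') (e : Bs b = insert x C) (e' : Bs b' = insert y C)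
    {k k' : Fin d} (hk : b k = x) (hk' : b' k' = y) (hki : (k : ℕ) < i) (hki' : i ≤ (k' : ℕ))
    (hbF : gf n d i b ∈ F) (hbF' : gf n d i b' ∈ F) : False := by
  have hkd := k'.2
  let u : Fin d := ⟨i, by omega⟩
  let v : Fin d := ⟨i - 1, by omega⟩
  have hB := double_bound hF hp1 hbF' hbF (j := v) (k := u) (by simp only [v]; omega) rfl
  have hvu : b' v < b' k' := hb' (by rw [Fin.lt_def]; simp only [v]; omega)
  have key : b u ≤ b' v := by
    have h1 := (le_iff_count hb' v (b' v)).1 le_rfl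
    rw [e', count_insert hy, if_neg (by omega)] at h1
    have h2 : b k ≤ b' v := by
      rw [le_iff_count hb, e, count_insert hx]
      simp only [v] at h1 ⊢; omega
    rw [le_iff_count hb, e, count_insert hx, if_pos (by omega)]
    simp only [u, v] at h1 ⊢; omega
  unfold gf at hB
  rw [if_pos (by simp only [v]; omega), if_neg (by simp only [u]; omega)] at hB
  simp only [u, v] at hB key
  omega

/-- The plus set attached to a Ferrers diagram. -/
def plusF (n d i : ℕ) (F : Set (Fin d → ℤ)) : Set (Finset ℕ) :=
  {B | ∃ b : Fin d → ℕ, Valid n b ∧ Bs b = B ∧ gf n d i b ∈ F}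

lemma coSig_F {n d i p : ℕ} {F : Set (Fin d → ℤ)} (hF : IsFerrers d i p F) (hp1 : 1 ≤ p)
    (hp : p + d ≤ n) : IsCoSignotope n d (ofPlusSet (plusF n d i F)) := by
  constructor
  · intro A hA
    obtain ⟨b, hb, rfl, _⟩ := ofPlusSet_iff.1 hA
    exact ⟨hb.sub, Bs_card hb.1⟩
  · intro B hB hBc x0 hx0
    set C := B.erase x0 with hC
    have hCs : C ⊆ Finset.Icc 1 n := fun z hz => hB (Finset.mem_of_mem_erase hz)
    have hCc : C.card + 1 = d := by rw [hC, Finset.card_erase_add_one hx0, hBc]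
    have hmove : ∀ x ∈ Finset.Icc 1 n \ C, ∀ y ∈ Finset.Icc 1 n \ C, ∀ b : Fin d → ℕ, Valid n b →
        Bs b = insert x C → gf n d i b ∈ F → ∀ k, b k = x →
        ((y < x ∧ (k : ℕ) < i) ∨ (x < y ∧ i ≤ (k : ℕ))) → insert y C ∈ plusF n d i F := by
      intro x hx y hy b hb e hbF k hk hs
      rw [Finset.mem_sdiff] at hx hy
      obtain ⟨b', hb', e'⟩ := exists_Bs (n := n) (d := d) (B := insert y C)
        (Finset.insert_subset hy.1 hCs) (by rw [Finset.card_insert_of_notMem hy.2, hCc])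
      exact ⟨b', hb', e', hF.2.2 _ hbF _ (gf_mem_Z hb')
        (compare_lt hx.2 hy.2 hb.1 hb'.1 e e' hk hs)⟩
    apply series_of_mono
    simp only [ofPlusSet_iff]
    by_cases hex : ∃ x ∈ Finset.Icc 1 n \ C, ∃ b : Fin d → ℕ, Valid n b ∧
        Bs b = insert x C ∧ gf n d i b ∈ F ∧ ∃ k, b k = x ∧ (k : ℕ) < i
    · right
      obtain ⟨x1, hx1, b1, hb1, e1, hF1, k1, hk1, hki1⟩ := hex
      intro y hy x hx hyx hpx
      obtain ⟨b, hb, e, hbF⟩ := hpx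
      obtain ⟨k, hk⟩ := mem_Bs.1 (e ▸ Finset.mem_insert_self x C : x ∈ Bs b)
      refine hmove x hx y hy b hb e hbF k hk (Or.inl ⟨hyx, ?_⟩)
      by_contra hki
      exact no_mixed hF hp1 hp (Finset.mem_sdiff.1 hx1).2 (Finset.mem_sdiff.1 hx).2 hb1.1 hb.1
        e1 e hk1 hk hki1 (not_lt.1 hki) hF1 hbF
    · left
      intro x hx y hy hxy hpx
      obtain ⟨b, hb, e, hbF⟩ := hpx
      obtain ⟨k, hk⟩ := mem_Bs.1 (e ▸ Finset.mem_insert_self x C : x ∈ Bs b)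
      refine hmove x hx y hy b hb e hbF k hk (Or.inr ⟨hxy, ?_⟩)
      by_contra hki
      exact hex ⟨x, hx, b, hb, e, hbF, k, hk, not_le.1 hki⟩

lemma conn_F {n d i p : ℕ} {F : Set (Fin d → ℤ)} (hdn : d < n) (hi : i ≤ d)
    (hF : IsFerrers d i p F) : ∀ N : ℕ, ∀ b : Fin d → ℕ, Valid n b → gf n d i b ∈ F →
      (∑ k, (gf n d i b k).toNat) = N →
      plusConn n d (ofPlusSet (plusF n d i F)) (sourceSubset n d i) (Bs b) := by
  intro N
  induction N using Nat.strong_induction_on with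
  | _ N ih =>
    intro b hb hbF hN
    by_cases heq : (fun _ => 1) = gf n d i b
    · have : srcf n d i = b := gf_inj (n := n) (i := i) (by rw [srcf_gf hdn, heq])
      rw [← this, Bs_srcf hdn hi]
      exact Relation.ReflTransGen.refl
    have hpos := (gf_mem_Z (i := i) hb).1
    obtain ⟨k, hkZ, hkle⟩ := Z_step (gf_mem_Z hb) one_mem_Z (fun j => hpos j) heq
    have hle : ∀ j, Function.update (gf n d i b) k (gf n d i b k - 1) j ≤ gf n d i b j := by
      intro j
      rw [Function.update_apply]; split_ifs with c
      · subst c; omega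
      · exact le_rfl
    obtain ⟨b', hb', e⟩ := inv_of_le hb hkZ hle
    have hb'F : gf n d i b' ∈ F := by rw [e]; exact hF.2.2 _ hbF _ hkZ hle
    obtain ⟨hu, hs⟩ := step_repr e
    have hlt : (∑ j, (gf n d i b' j).toNat) < N := by
      rw [← hN]
      apply Finset.sum_lt_sum
      · intro j _
        rw [e]
        have := hle j
        omega
      · refine ⟨k, Finset.mem_univ _, ?_⟩
        have := hkle k
        rw [e]
        rw [Function.update_self] at this ⊢
        omega
    refine Relation.ReflTransGen.tail (ih _ hlt b' hb' hb'F rfl) ?_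
    have hbu : b = Function.update b' k (b k) := by
      rw [hu]; simp
    refine ⟨ofPlusSet_iff.2 ⟨b', hb', rfl, hb'F⟩, ofPlusSet_iff.2 ⟨b, hb, rfl, hbF⟩,
      hb'.sub, Bs_card hb'.1, hb.sub, Bs_card hb.1, b' k, mem_Bs.2 ⟨k, rfl⟩, b k,
      Finset.mem_Icc.2 (hb.2 k), ?_, ?_, ?_⟩
    · intro h
      obtain ⟨l, hl⟩ := mem_Bs.1 h
      by_cases hlk : l = k
      · subst hlk; omega
      · have : b' l = b l := by rw [hu, Function.update_of_ne hlk]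
        exact hlk (hb.1.injective (this.symm.trans hl))
    · conv_lhs => rw [hbu]
      exact Bs_update hb'.1.injective k _
    · intro z _
      omega

lemma surjective_part {n d p i : ℕ} {F : Set (Fin d → ℤ)} (hdn : d < n) (hi : i ≤ d)
    (hp1 : 1 ≤ p) (hp : p + d ≤ n) (hF : IsFerrers d i p F) :
    ∃ τ ∈ coSigOnly n d p i, gMap n d i '' {B | τ B = true} = F := by
  have hco := coSig_F (n := n) hF hp1 hp
  have himg : gMap n d i '' {B | ofPlusSet (plusF n d i F) B = true} = F := by
    ext a
    simp only [ofPlusSet_iff, Set.mem_image, Set.mem_setOf_eq]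
    constructor
    · rintro ⟨B, ⟨b, hb, rfl, hbF⟩, rfl⟩
      rw [gMap_Bs hb.1]; exact hbF
    · intro ha
      obtain ⟨b, hb, rfl⟩ := F_repr (n := n) hi hF hp1 hp ha
      exact ⟨Bs b, ⟨b, hb, rfl, ha⟩, gMap_Bs hb.1⟩
  refine ⟨ofPlusSet (plusF n d i F), ⟨hco, ?_, ?_⟩, himg⟩
  · unfold plusCount
    rw [← (gMap_injOn (i := i) hco.1).ncard_image, himg, hF.2.1]
  · intro B hB
    refine ⟨?_, hB, ?_⟩
    · rw [ofPlusSet_iff, ← Bs_srcf hdn hi]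
      refine ⟨_, srcf_valid hdn, rfl, ?_⟩
      rw [srcf_gf hdn]
      obtain ⟨b, hb, rfl, hbF⟩ := ofPlusSet_iff.1 hB
      exact hF.2.2 _ hbF _ one_mem_Z (fun j => (gf_mem_Z hb).1 j)
    · obtain ⟨b, hb, rfl, hbF⟩ := ofPlusSet_iff.1 hB
      exact conn_F hdn hi hF _ b hb hbF rfl

/-- **Lemma.** The map `τ ↦ ℱ_τ = {g_{n,d,i}(B) : B ∈ τ⁻¹(+)}` is a bijection between
`𝒮̄_{p,i}(n,d)` and the set of `(d,i)`-Ferrers diagrams with respect to `p`. -/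
theorem statement8 (n d p i : ℕ) (hdn : d < n) (hp1 : 1 ≤ p) (hp : p + d ≤ n)
    (hi : i ≤ d) :
    Set.BijOn (fun τ : Finset ℕ → Bool => gMap n d i '' {B | τ B = true})
      (coSigOnly n d p i) {F : Set (Fin d → ℤ) | IsFerrers d i p F} := by
  refine ⟨fun τ hτ => forward hdn hi hp1 hp hτ, injective_part, fun F hF => ?_⟩
  obtain ⟨τ, hτ, e⟩ := surjective_part hdn hi hp1 hp hF
  exact ⟨τ, hτ, e⟩
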